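/- Discrepancy probability for half-spaces in the plane: Let w, v ∈ ℝ² be unit vectors, let Θ be uniformly distributed on [0, 2π), and let X := (cos Θ, sin Θ). Then P[ 𝟙[⟨w, X⟩ ≥ 0] ≠ 𝟙[⟨v, X⟩ ≥ 0] ] = arccos(⟨w, v⟩) / π. -/

import Mathlib

open MeasureTheory Real
open scoped RealInnerProductSpace

lemma aux_angle (w : EuclideanSpace ℝ (Fin 2)) (hw : ‖w‖ = 1) :
    ∃ a : ℝ, w 0 = Real.cos a ∧ w 1 = Real.sin a := by
  have h : ‖(⟨w 0, w 1⟩ : ℂ)‖ = 1 := by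
    rw [EuclideanSpace.norm_eq] at hw
    simp [Fin.sum_univ_two] at hw
    rw [Complex.norm_def, Complex.normSq_mk, Real.sqrt_eq_one]
    nlinarith
  refine ⟨Complex.arg ⟨w 0, w 1⟩, ?_, ?_⟩
  · have := Complex.norm_mul_cos_arg (⟨w 0, w 1⟩ : ℂ)
    rw [h, one_mul] at this
    exact this.symm
  · have := Complex.norm_mul_sin_arg (⟨w 0, w 1⟩ : ℂ)
    rw [h, one_mul] at this
    exact this.symm

def auxS (a d : ℝ) : Set ℝ := {t | ¬ (0 ≤ Real.cos (t - a) ↔ 0 ≤ Real.cos (t - a - d))}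

lemma auxS_meas (a d : ℝ) : MeasurableSet (auxS a d) := by
  unfold auxS
  have h1 : MeasurableSet {t : ℝ | 0 ≤ Real.cos (t - a)} :=
    measurableSet_le measurable_const (by fun_prop)
  have h2 : MeasurableSet {t : ℝ | 0 ≤ Real.cos (t - a - d)} :=
    measurableSet_le measurable_const (by fun_prop)
  exact (h1.iff h2).compl

lemma auxS_vol (a d : ℝ) (h0 : 0 ≤ d) (h1 : d ≤ π) :
    volume (auxS a d ∩ Set.Ioc (a - π / 2) (a - π / 2 + 2 * π)) = ENNReal.ofReal (2 * d) := by
  have hpi := Real.pi_pos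
  have e2 : ENNReal.ofReal (2 * d) = ENNReal.ofReal d + ENNReal.ofReal d := by
    rw [← ENNReal.ofReal_add h0 h0, two_mul]
  apply le_antisymm
  · have hsub : auxS a d ∩ Set.Ioc (a - π / 2) (a - π / 2 + 2 * π) ⊆
        (Set.Icc (a - π / 2) (a - π / 2 + d) ∪ Set.Icc (a + π / 2) (a + π / 2 + d))
          ∪ {a - π / 2 + 2 * π} := by
      rintro t ⟨ht, ht1, ht2⟩
      by_contra hcon
      simp only [Set.mem_union, Set.mem_Icc, Set.mem_singleton_iff, not_or, not_and, not_le] at hcon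
      obtain ⟨⟨c1, c2⟩, c3⟩ := hcon
      have c1' := c1 ht1.le
      have ht2' := lt_of_le_of_ne ht2 c3
      apply ht
      by_cases hc : t < a + π / 2
      · have p1 : 0 ≤ Real.cos (t - a) :=
          Real.cos_nonneg_of_neg_pi_div_two_le_of_le (by linarith) (by linarith)
        have p2 : 0 ≤ Real.cos (t - a - d) :=
          Real.cos_nonneg_of_neg_pi_div_two_le_of_le (by linarith) (by linarith)
        exact ⟨fun _ => p2, fun _ => p1⟩
      · have c2' := c2 (not_lt.mp hc)
        have p1 : Real.cos (t - a) < 0 :=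
          Real.cos_neg_of_pi_div_two_lt_of_lt (by linarith) (by linarith)
        have p2 : Real.cos (t - a - d) < 0 :=
          Real.cos_neg_of_pi_div_two_lt_of_lt (by linarith) (by linarith)
        exact ⟨fun h => absurd h (not_le.mpr p1), fun h => absurd h (not_le.mpr p2)⟩
    refine (measure_mono hsub).trans ((measure_union_le _ _).trans ?_)
    rw [Real.volume_singleton, add_zero]
    refine (measure_union_le _ _).trans ?_
    rw [Real.volume_Icc, Real.volume_Icc, add_sub_cancel_left, add_sub_cancel_left, e2]
  · have hsub : Set.Ioo (a - π / 2) (a - π / 2 + d) ∪ Set.Ioo (a + π / 2) (a + π / 2 + d) ⊆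
        auxS a d ∩ Set.Ioc (a - π / 2) (a - π / 2 + 2 * π) := by
      rintro t (⟨ht1, ht2⟩ | ⟨ht1, ht2⟩)
      · refine ⟨?_, by linarith, by linarith⟩
        have p1 : 0 ≤ Real.cos (t - a) :=
          Real.cos_nonneg_of_neg_pi_div_two_le_of_le (by linarith) (by linarith)
        have p2 : Real.cos (t - a - d) < 0 := by
          rw [← Real.cos_neg]
          exact Real.cos_neg_of_pi_div_two_lt_of_lt (by linarith) (by linarith)
        exact fun h => absurd (h.1 p1) (not_le.mpr p2)
      · refine ⟨?_, by linarith, by linarith⟩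
        have p1 : Real.cos (t - a) < 0 :=
          Real.cos_neg_of_pi_div_two_lt_of_lt (by linarith) (by linarith)
        have p2 : 0 ≤ Real.cos (t - a - d) :=
          Real.cos_nonneg_of_neg_pi_div_two_le_of_le (by linarith) (by linarith)
        exact fun h => absurd (h.2 p2) (not_le.mpr p1)
    refine le_trans ?_ (measure_mono hsub)
    rw [measure_union _ measurableSet_Ioo, Real.volume_Ioo, Real.volume_Ioo,
      add_sub_cancel_left, add_sub_cancel_left, e2]
    rw [Set.disjoint_left]
    rintro t ⟨_, ht⟩ ⟨ht', _⟩
    linarith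

lemma auxS_vol' (a d : ℝ) (h0 : 0 ≤ d) (h1 : d ≤ π) :
    volume (auxS a d ∩ Set.Ico 0 (2 * π)) = ENNReal.ofReal (2 * d) := by
  rw [← auxS_vol a d h0 h1]
  have e : volume (auxS a d ∩ Set.Ico 0 (2 * π)) = volume (auxS a d ∩ Set.Ioc 0 (0 + 2 * π)) := by
    rw [zero_add]
    exact measure_congr (Filter.EventuallyEq.rfl.inter Ico_ae_eq_Ioc)
  rw [e]
  refine (isAddFundamentalDomain_Ioc Real.two_pi_pos 0).measure_set_eq
    (isAddFundamentalDomain_Ioc Real.two_pi_pos _) (auxS_meas a d) ?_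
  rintro ⟨g, hg⟩
  obtain ⟨k, rfl⟩ := AddSubgroup.mem_zmultiples_iff.mp hg
  ext t
  have q1 : Real.cos (k * (2 * π) + t - a) = Real.cos (t - a) := by
    rw [← Real.cos_add_int_mul_two_pi (t - a) k]; congr 1; ring
  have q2 : Real.cos (k * (2 * π) + t - a - d) = Real.cos (t - a - d) := by
    rw [← Real.cos_add_int_mul_two_pi (t - a - d) k]; congr 1; ring
  simp [auxS, AddSubgroup.vadd_def, q1, q2]

theorem halfspace_discrepancy_probability
    {Ω : Type*} [MeasurableSpace Ω] (μ : Measure Ω) [IsProbabilityMeasure μ]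
    (w v : EuclideanSpace ℝ (Fin 2)) (hw : ‖w‖ = 1) (hv : ‖v‖ = 1)
    (Θ : Ω → ℝ) (hΘmeas : Measurable Θ)
    -- `Θ` is uniformly distributed on `[0, 2π)`
    (hΘ : Measure.map Θ μ
      = (ENNReal.ofReal (2 * Real.pi))⁻¹ • volume.restrict (Set.Ico (0 : ℝ) (2 * Real.pi)))
    (X : Ω → EuclideanSpace ℝ (Fin 2))
    (hX : ∀ ω, X ω = (WithLp.equiv 2 (Fin 2 → ℝ)).symm ![Real.cos (Θ ω), Real.sin (Θ ω)]) :
    μ {ω | (if 0 ≤ ⟪w, X ω⟫ then (1 : ℕ) else 0) ≠ (if 0 ≤ ⟪v, X ω⟫ then (1 : ℕ) else 0)}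
      = ENNReal.ofReal (Real.arccos ⟪w, v⟫ / Real.pi) := by
  obtain ⟨a, ha0, ha1⟩ := aux_angle w hw
  obtain ⟨b, hb0, hb1⟩ := aux_angle v hv
  have hwv : ⟪w, v⟫ = Real.cos (b - a) := by
    simp [PiLp.inner_apply, Fin.sum_univ_two, ha0, ha1, hb0, hb1, Real.cos_sub]
  have hwX : ∀ ω, ⟪w, X ω⟫ = Real.cos (Θ ω - a) := by
    intro ω
    simp [hX, PiLp.inner_apply, Fin.sum_univ_two, ha0, ha1, Real.cos_sub]
  have hvX : ∀ ω, ⟪v, X ω⟫ = Real.cos (Θ ω - b) := by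
    intro ω
    simp [hX, PiLp.inner_apply, Fin.sum_univ_two, hb0, hb1, Real.cos_sub]
  rw [hwv]
  set d := Real.arccos (Real.cos (b - a)) with hd
  have hcos : Real.cos d = Real.cos (b - a) :=
    Real.cos_arccos (Real.neg_one_le_cos _) (Real.cos_le_one _)
  have h0 : 0 ≤ d := Real.arccos_nonneg _
  have h1 : d ≤ π := Real.arccos_le_pi _
  have key : ∃ c, {ω | (if 0 ≤ ⟪w, X ω⟫ then (1 : ℕ) else 0) ≠
      (if 0 ≤ ⟪v, X ω⟫ then (1 : ℕ) else 0)} = Θ ⁻¹' (auxS c d) := by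
    obtain ⟨k, hk | hk⟩ := Real.cos_eq_cos_iff.mp hcos
    · refine ⟨a, ?_⟩
      ext ω
      have q : Real.cos (Θ ω - a - d) = Real.cos (Θ ω - b) := by
        rw [← Real.cos_add_int_mul_two_pi (Θ ω - b) k]; congr 1; linarith
      simp only [Set.mem_ofPred_eq, Set.mem_preimage, auxS, hwX, hvX, q]
      split_ifs with g1 g2 g2 <;> simp [g1, g2]
    · refine ⟨b, ?_⟩
      ext ω
      have q : Real.cos (Θ ω - b - d) = Real.cos (Θ ω - a) := by
        rw [← Real.cos_sub_int_mul_two_pi (Θ ω - a) k]; congr 1; linarith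
      simp only [Set.mem_ofPred_eq, Set.mem_preimage, auxS, hwX, hvX, q]
      split_ifs with g1 g2 g2 <;> simp [g1, g2]
  obtain ⟨c, hc⟩ := key
  rw [hc, ← Measure.map_apply hΘmeas (auxS_meas c d), hΘ, Measure.smul_apply,
    Measure.restrict_apply (auxS_meas c d), auxS_vol' c d h0 h1, smul_eq_mul, mul_comm,
    ← div_eq_mul_inv, ← ENNReal.ofReal_div_of_pos Real.two_pi_pos,
    mul_div_mul_left _ _ two_ne_zero]
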